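/- (q-Gauss summation) Let 0<q<1 and a,b,c∈ℂ with c ∉ {1,q^{-1},q^{-2},…}, ab≠0 and |c/(ab)|<1. Then ₂φ₁(a,b;c;q,c/(ab)) = (c/a, c/b;q)_∞ / (c, c/(ab);q)_∞. -/

import Mathlib

/-!
Put `z = c/(ab)`, so that `c = abz`, `c/a = bz` and `c/b = az`: in the parameters `a`, `b`, `z` the
summation formula involves no division by `a` or `b`. Replacing `z` by `zq` replaces `c` by `cq`,
and the two series are related by the contiguous relation
`(1 - abz)(1 - z) ₂φ₁(a,b;abz;z) = (1 - az)(1 - bz) ₂φ₁(a,b;abzq;zq)`,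
because termwise the difference of the two sides telescopes. Iterating it `N` times produces the
finite products `(abz;q)_N (z;q)_N` and `(az;q)_N (bz;q)_N`, which tend to the infinite ones, while
`₂φ₁(a,b;abzq^N;zq^N) → 1`: the coefficients are bounded uniformly in `N`, so by dominated
convergence only the constant term survives.
-/

noncomputable section

/-- The finite q-shifted factorial `(a;q)_k`. -/
def qp (q a : ℂ) (k : ℕ) : ℂ := ∏ j ∈ Finset.range k, (1 - a * q ^ j)

/-- The infinite q-shifted factorial `(a;q)_∞`. -/
def qpi (q a : ℂ) : ℂ := ∏' j : ℕ, (1 - a * q ^ j)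

/-- The basic hypergeometric series `₂φ₁(a,b;c;q,z)`. -/
def phi21 (q a b c z : ℂ) : ℂ :=
  ∑' k : ℕ, qp q a k * qp q b k / (qp q c k * qp q q k) * z ^ k

open Filter Topology

/-- The coefficient of `z ^ k` in `₂φ₁(a,b;c;q,z)`; separating it from `z ^ k` lets the argument of
the series vary independently of its parameters. -/
def phi21Coeff (q a b c : ℂ) (k : ℕ) : ℂ :=
  qp q a k * qp q b k / (qp q c k * qp q q k)

section

variable {q a b c z : ℂ}

lemma qp_zero (q a : ℂ) : qp q a 0 = 1 :=
  Finset.prod_range_zero _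

lemma qp_succ (q a : ℂ) (k : ℕ) : qp q a (k + 1) = qp q a k * (1 - a * q ^ k) :=
  Finset.prod_range_succ _ _

lemma qp_add (q a : ℂ) (n k : ℕ) : qp q a (n + k) = qp q a n * qp q (a * q ^ n) k := by
  simp only [qp, Finset.prod_range_add, pow_add, mul_assoc]

lemma one_sub_mul_qp_mul_self (q a : ℂ) (k : ℕ) :
    (1 - a) * qp q (a * q) k = qp q a k * (1 - a * q ^ k) := by
  rw [← qp_succ, add_comm k 1, qp_add, qp_succ, qp_zero, pow_zero, pow_one, one_mul, mul_one]

lemma qp_ne_zero (ha : ∀ n : ℕ, a * q ^ n ≠ 1) (k : ℕ) : qp q a k ≠ 0 :=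
  Finset.prod_ne_zero_iff.2 fun j _ ↦ sub_ne_zero.2 (ha j).symm

lemma norm_mul_pow_lt_one (hq : ‖q‖ < 1) (hz : ‖z‖ < 1) (n : ℕ) : ‖z * q ^ n‖ < 1 := by
  rw [norm_mul, norm_pow]
  exact mul_lt_one_of_nonneg_of_lt_one_left (norm_nonneg z) hz
    (pow_le_one₀ (norm_nonneg q) hq.le)

lemma mul_pow_ne_one (hq : ‖q‖ < 1) (hz : ‖z‖ < 1) (n : ℕ) : z * q ^ n ≠ 1 :=
  ne_of_apply_ne norm (by simpa only [norm_one] using (norm_mul_pow_lt_one hq hz n).ne)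

lemma mul_pow_mul_pow_ne_one (hc : ∀ n : ℕ, c * q ^ n ≠ 1) (N n : ℕ) :
    c * q ^ N * q ^ n ≠ 1 := by
  rw [mul_assoc, ← pow_add]
  exact hc (N + n)

lemma summable_norm_neg_mul_pow (hq : ‖q‖ < 1) (a : ℂ) :
    Summable fun j : ℕ ↦ ‖-(a * q ^ j)‖ := by
  simp only [norm_neg, norm_mul, norm_pow]
  exact (summable_geometric_of_lt_one (norm_nonneg q) hq).mul_left ‖a‖

lemma tendsto_qp (hq : ‖q‖ < 1) (a : ℂ) : Tendsto (qp q a) atTop (𝓝 (qpi q a)) := by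
  have h := multipliable_one_add_of_summable (summable_norm_neg_mul_pow hq a)
  simp only [← sub_eq_add_neg] at h
  exact h.tendsto_prod_tprod_nat

lemma qpi_ne_zero (hq : ‖q‖ < 1) (ha : ∀ n : ℕ, a * q ^ n ≠ 1) : qpi q a ≠ 0 := by
  simpa only [qpi, sub_eq_add_neg] using
    tprod_one_add_ne_zero_of_summable (f := fun j : ℕ ↦ -(a * q ^ j))
      (fun j ↦ by simpa only [← sub_eq_add_neg] using sub_ne_zero.2 (ha j).symm)
      (summable_norm_neg_mul_pow hq a)

lemma phi21Coeff_succ (q a b c : ℂ) (k : ℕ) :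
    phi21Coeff q a b c (k + 1) = phi21Coeff q a b c k *
      ((1 - a * q ^ k) * (1 - b * q ^ k) / ((1 - c * q ^ k) * (1 - q ^ (k + 1)))) := by
  simp only [phi21Coeff, qp_succ, div_mul_div_comm, pow_succ']
  ring

lemma phi21Coeff_mul_self (hc : ∀ n : ℕ, c * q ^ n ≠ 1) (k : ℕ) :
    phi21Coeff q a b (c * q) k = phi21Coeff q a b c k * ((1 - c) / (1 - c * q ^ k)) := by
  have hc₀ : 1 - c ≠ 0 := sub_ne_zero.2 (by simpa using (hc 0).symm)
  have hshift : qp q (c * q) k = qp q c k * (1 - c * q ^ k) / (1 - c) := by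
    rw [eq_div_iff hc₀, mul_comm, one_sub_mul_qp_mul_self]
  rw [phi21Coeff, phi21Coeff, hshift]
  field_simp

/-- Since `(cq^N;q)_k = (c;q)_{N+k} / (c;q)_N`, the bound can be chosen independently of `N`. -/
lemma exists_norm_phi21Coeff_le (hq : ‖q‖ < 1) (a b : ℂ) (hc : ∀ n : ℕ, c * q ^ n ≠ 1) :
    ∃ C, ∀ N k : ℕ, ‖phi21Coeff q a b (c * q ^ N) k‖ ≤ C := by
  have hq_ne := mul_pow_ne_one hq hq
  obtain ⟨A, hA⟩ := (((tendsto_qp hq a).mul (tendsto_qp hq b)).div (tendsto_qp hq q)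
    (qpi_ne_zero hq hq_ne)).norm.bddAbove_range
  obtain ⟨B, hB⟩ := (tendsto_qp hq c).norm.bddAbove_range
  obtain ⟨D, hD⟩ := ((tendsto_qp hq c).inv₀ (qpi_ne_zero hq hc)).norm.bddAbove_range
  rw [mem_upperBounds, Set.forall_mem_range] at hA hB hD
  refine ⟨A * (B * D), fun N k ↦ ?_⟩
  have hfactor : phi21Coeff q a b (c * q ^ N) k =
      qp q a k * qp q b k / qp q q k * (qp q c N * (qp q c (N + k))⁻¹) := by
    have hcN := qp_ne_zero hc N
    rw [phi21Coeff, qp_add, mul_inv, mul_inv_cancel_left₀ hcN]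
    ring
  have hA₀ : 0 ≤ A := (norm_nonneg _).trans (hA 0)
  have hB₀ : 0 ≤ B := (norm_nonneg _).trans (hB 0)
  rw [hfactor, norm_mul, norm_mul]
  gcongr
  exacts [hA k, hB N, hD (N + k)]

lemma summable_phi21Coeff_mul_pow (hq : ‖q‖ < 1) (a b : ℂ) (hc : ∀ n : ℕ, c * q ^ n ≠ 1)
    (hz : ‖z‖ < 1) : Summable fun k ↦ phi21Coeff q a b c k * z ^ k := by
  obtain ⟨C, hC⟩ := exists_norm_phi21Coeff_le hq a b hc
  refine .of_norm_bounded ((summable_geometric_of_lt_one (norm_nonneg z) hz).mul_left C)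
    fun k ↦ ?_
  rw [norm_mul, norm_pow]
  gcongr
  simpa only [pow_zero, mul_one] using hC 0 k

lemma tendsto_phi21_mul_pow (hq : ‖q‖ < 1) (a b : ℂ) (hc : ∀ n : ℕ, c * q ^ n ≠ 1)
    {u : ℕ → ℂ} (hu : Tendsto u atTop (𝓝 0)) :
    Tendsto (fun N ↦ phi21 q a b (c * q ^ N) (u N)) atTop (𝓝 1) := by
  obtain ⟨C, hC⟩ := exists_norm_phi21Coeff_le hq a b hc
  have hterm (N k : ℕ) : ‖phi21Coeff q a b (c * q ^ N) k * u N ^ k‖ ≤ C * ‖u N‖ ^ k := by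
    rw [norm_mul, norm_pow]
    gcongr
    exact hC N k
  have hC₀ : 0 ≤ C := (norm_nonneg _).trans (hC 0 0)
  have hu_norm : Tendsto (fun N ↦ ‖u N‖) atTop (𝓝 0) := tendsto_zero_iff_norm_tendsto_zero.1 hu
  have hu_half : ∀ᶠ N in atTop, ‖u N‖ ≤ 1 / 2 := hu_norm.eventually_le_const one_half_pos
  rw [← tsum_ite_eq (0 : ℕ) (fun _ ↦ (1 : ℂ))]
  refine tendsto_tsum_of_dominated_convergence (summable_geometric_two.mul_left C) (fun k ↦ ?_)
    (hu_half.mono fun N hN k ↦ (hterm N k).trans (by gcongr))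
  obtain rfl | hk := eq_or_ne k 0
  · simp only [qp_zero, mul_one, div_one, pow_zero, if_true, tendsto_const_nhds]
  · rw [if_neg hk]
    refine squeeze_zero_norm (fun N ↦ hterm N k) ?_
    simpa only [zero_pow hk, mul_zero] using (hu_norm.pow k).const_mul C

lemma phi21_telescope (hq : ∀ n : ℕ, q * q ^ n ≠ 1) (hc : ∀ n : ℕ, a * b * z * q ^ n ≠ 1)
    (k : ℕ) :
    (1 - a * b * z) * (1 - z) * (phi21Coeff q a b (a * b * z) k * z ^ k) -
        (1 - a * z) * (1 - b * z) * (phi21Coeff q a b (a * b * z * q) k * (z * q) ^ k) =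
      (1 - a * b * z) * ((1 - q ^ k) * (phi21Coeff q a b (a * b * z) k * z ^ k) -
        (1 - q ^ (k + 1)) * (phi21Coeff q a b (a * b * z) (k + 1) * z ^ (k + 1))) := by
  have hck : 1 - a * b * z * q ^ k ≠ 0 := sub_ne_zero.2 (hc k).symm
  have hqk : 1 - q ^ (k + 1) ≠ 0 :=
    sub_ne_zero.2 (by simpa only [pow_succ'] using (hq k).symm)
  rw [phi21Coeff_mul_self hc, phi21Coeff_succ, mul_pow, pow_succ z]
  -- With `x = q ^ k` and the `k`-th term divided out, this is
  -- `(1 - z)(1 - abzx) - (1 - az)(1 - bz)x = (1 - x)(1 - abzx) - z(1 - ax)(1 - bx)`.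
  field_simp
  ring

lemma phi21_contiguous (hq : ‖q‖ < 1) (hz : ‖z‖ < 1) (hc : ∀ n : ℕ, a * b * z * q ^ n ≠ 1) :
    (1 - a * b * z) * (1 - z) * phi21 q a b (a * b * z) z =
      (1 - a * z) * (1 - b * z) * phi21 q a b (a * b * z * q) (z * q) := by
  set u : ℕ → ℂ := fun k ↦ phi21Coeff q a b (a * b * z) k * z ^ k
  have hzq : ‖z * q‖ < 1 := by simpa only [pow_one] using norm_mul_pow_lt_one hq hz 1
  have hcq (n : ℕ) : a * b * z * q * q ^ n ≠ 1 := by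
    simpa only [pow_one] using mul_pow_mul_pow_ne_one hc 1 n
  have hu : Summable u := summable_phi21Coeff_mul_pow hq a b hc hz
  have hu' := summable_phi21Coeff_mul_pow hq a b hcq hzq
  have hv : Tendsto (fun k ↦ (1 - q ^ k) * u k) atTop (𝓝 0) := by
    simpa only [mul_zero] using
      ((tendsto_pow_atTop_nhds_zero_of_norm_lt_one hq).const_sub 1).mul hu.tendsto_atTop_zero
  have hsum := ((hu.hasSum.mul_left ((1 - a * b * z) * (1 - z))).sub
    (hu'.hasSum.mul_left ((1 - a * z) * (1 - b * z)))).tendsto_sum_nat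
  have hzero : Tendsto (fun n ↦ (1 - a * b * z) * ((1 - q ^ 0) * u 0 - (1 - q ^ n) * u n))
      atTop (𝓝 0) := by
    simpa only [pow_zero, sub_self, zero_mul, zero_sub, mul_neg, neg_zero, mul_zero] using
      (hv.const_mul (1 - a * b * z)).neg
  refine sub_eq_zero.1 (tendsto_nhds_unique (hsum.congr fun n ↦ ?_) hzero)
  rw [Finset.sum_congr rfl fun k _ ↦ phi21_telescope (mul_pow_ne_one hq hq) hc k,
    ← Finset.mul_sum, Finset.sum_range_sub' fun k ↦ (1 - q ^ k) * u k]

lemma qp_mul_qp_mul_phi21 (hq : ‖q‖ < 1) (hz : ‖z‖ < 1) (hc : ∀ n : ℕ, a * b * z * q ^ n ≠ 1)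
    (N : ℕ) :
    qp q (a * b * z) N * qp q z N * phi21 q a b (a * b * z) z =
      qp q (a * z) N * qp q (b * z) N * phi21 q a b (a * b * z * q ^ N) (z * q ^ N) := by
  induction N with
  | zero => simp only [qp_zero, pow_zero, mul_one]
  | succ N ih =>
    have hstep := phi21_contiguous (a := a) (b := b) hq (norm_mul_pow_lt_one hq hz N)
      (by simpa only [mul_assoc] using mul_pow_mul_pow_ne_one hc N)
    simp only [qp_succ, pow_succ, ← mul_assoc] at hstep ⊢
    linear_combination (1 - a * b * z * q ^ N) * (1 - z * q ^ N) * ih +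
      qp q (a * z) N * qp q (b * z) N * hstep

theorem stmt4_general (hq : ‖q‖ < 1) (hz : ‖z‖ < 1) (hc : ∀ n : ℕ, a * b * z * q ^ n ≠ 1) :
    phi21 q a b (a * b * z) z =
      qpi q (b * z) * qpi q (a * z) / (qpi q (a * b * z) * qpi q z) := by
  have hden : qpi q (a * b * z) * qpi q z ≠ 0 :=
    mul_ne_zero (qpi_ne_zero hq hc) (qpi_ne_zero hq (mul_pow_ne_one hq hz))
  have hu : Tendsto (fun N ↦ z * q ^ N) atTop (𝓝 0) := by
    simpa only [mul_zero] using (tendsto_pow_atTop_nhds_zero_of_norm_lt_one hq).const_mul z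
  have hleft := ((tendsto_qp hq (a * b * z)).mul (tendsto_qp hq z)).mul_const
    (phi21 q a b (a * b * z) z)
  have hright := ((tendsto_qp hq (a * z)).mul (tendsto_qp hq (b * z))).mul
    (tendsto_phi21_mul_pow hq a b hc hu)
  have heq := tendsto_nhds_unique (hleft.congr (qp_mul_qp_mul_phi21 hq hz hc)) hright
  rw [eq_div_iff hden, mul_comm, heq, mul_one, mul_comm]

end

/-- q-Gauss summation:
`₂φ₁(a,b;c;q,c/(ab)) = (c/a;q)_∞ (c/b;q)_∞ / ((c;q)_∞ (c/(ab);q)_∞)`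
for `0<q<1`, `c ∉ {1,q^{-1},q^{-2},…}`, `ab ≠ 0` and `|c/(ab)| < 1`. -/
theorem stmt4 (q : ℝ) (hq0 : 0 < q) (hq1 : q < 1) (a b c : ℂ)
    (hc : ∀ n : ℕ, c * (q : ℂ) ^ n ≠ 1) (hab : a * b ≠ 0)
    (harg : ‖c / (a * b)‖ < 1) :
    phi21 (q : ℂ) a b c (c / (a * b)) =
      qpi (q : ℂ) (c / a) * qpi (q : ℂ) (c / b) /
        (qpi (q : ℂ) c * qpi (q : ℂ) (c / (a * b))) := by
  have hq : ‖(q : ℂ)‖ < 1 := by rwa [Complex.norm_real, Real.norm_of_nonneg hq0.le]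
  obtain ⟨ha, hb⟩ := mul_ne_zero_iff.1 hab
  have hc_eq : a * b * (c / (a * b)) = c := mul_div_cancel₀ c hab
  have ha_eq : b * (c / (a * b)) = c / a := by field_simp
  have hb_eq : a * (c / (a * b)) = c / b := by field_simp
  simpa only [hc_eq, ha_eq, hb_eq] using
    stmt4_general (a := a) (b := b) hq harg (by rwa [hc_eq])
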